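/- Let a_{n,1} = |S_{n,1}^{1≺n}(1324)| and b_{n,1} = |S_{n,1}^{2≺n}(1324)|. For all n ≥ 3, 2 · b_{n,1} = (n − 1) · a_{n−1,1}. (Equivalently, T_{2,1}(x) = (1/2) x² (d/dx) T_{1,1}(x), where T_{a,k}(x) = Σ_n |S_{n,k}^{a≺n}(1324)| xⁿ.) -/

import Mathlib

/-- A permutation of `{1,…,n}` (encoded as `Equiv.Perm (Fin n)` with 0-based values)
avoids the pattern 1324 if there are no indices `i < j < k < l` with
`σ i < σ k < σ j < σ l`. -/
def Avoids1324 {n : ℕ} (σ : Equiv.Perm (Fin n)) : Prop :=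
  ¬ ∃ i j k l : Fin n, i < j ∧ j < k ∧ k < l ∧ σ i < σ k ∧ σ k < σ j ∧ σ j < σ l

/-- The set `S_{n,k}^{a ≺ n}(1324)`: 1324-avoiding permutations with the entry `a`
exactly `k` places to the left of the entry `n`, and the entries `1, …, a-1` all to
the right of `n`.  (Values are 0-based: the entry `a` is `⟨a-1, _⟩`.) -/
def SPerm (n a k : ℕ) : Set (Equiv.Perm (Fin n)) :=
  {σ | Avoids1324 σ ∧ ∃ hn : n - 1 < n, ∃ ha : a - 1 < n,
    ((σ.symm ⟨n - 1, hn⟩ : Fin n) : ℕ) = ((σ.symm ⟨a - 1, ha⟩ : Fin n) : ℕ) + k ∧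
    ∀ b : Fin n, (b : ℕ) + 1 < a → σ.symm ⟨n - 1, hn⟩ < σ.symm b}

theorem mem11 (k : ℕ) (τ : Equiv.Perm (Fin (k+2))) :
    τ ∈ SPerm (k+2) 1 1 ↔ Avoids1324 τ ∧
      (τ.symm (Fin.last (k+1))).val = (τ.symm 0).val + 1 := by
  constructor
  · rintro ⟨h, _, _, h2, _⟩
    exact ⟨h, h2⟩
  · rintro ⟨h, h2⟩
    exact ⟨h, by omega, by omega, h2, fun b hb => by omega⟩

theorem mem21 (k : ℕ) (σ : Equiv.Perm (Fin (k+3))) :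
    σ ∈ SPerm (k+3) 2 1 ↔ Avoids1324 σ ∧
      (σ.symm (Fin.last (k+2))).val = (σ.symm (Fin.succ 0)).val + 1 ∧
      σ.symm (Fin.last (k+2)) < σ.symm 0 := by
  constructor
  · rintro ⟨h, _, _, h2, h3⟩
    exact ⟨h, h2, h3 0 (by simp)⟩
  · rintro ⟨h, h2, h3⟩
    refine ⟨h, by omega, by omega, h2, fun b hb => ?_⟩
    have : b = 0 := Fin.ext (show b.val = 0 by omega)
    subst this
    exact h3

/-- Insert the smallest value at position `p`. -/
def ins (m : ℕ) (x : Fin (m+1) × Equiv.Perm (Fin m)) : Equiv.Perm (Fin (m+1)) :=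
  ((finSuccEquiv' x.1).trans (Equiv.optionCongr x.2)).trans (finSuccEquiv' 0).symm

theorem ins_self (m : ℕ) (p : Fin (m+1)) (τ : Equiv.Perm (Fin m)) : ins m (p, τ) p = 0 := by
  simp [ins]

theorem ins_succAbove (m : ℕ) (p : Fin (m+1)) (τ : Equiv.Perm (Fin m)) (i : Fin m) :
    ins m (p, τ) (p.succAbove i) = (τ i).succ := by
  simp [ins]

theorem ins_symm_zero (m : ℕ) (p : Fin (m+1)) (τ : Equiv.Perm (Fin m)) :
    (ins m (p, τ)).symm 0 = p := by
  rw [Equiv.symm_apply_eq, ins_self]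

theorem ins_symm_succ (m : ℕ) (p : Fin (m+1)) (τ : Equiv.Perm (Fin m)) (i : Fin m) :
    (ins m (p, τ)).symm i.succ = p.succAbove (τ.symm i) := by
  rw [Equiv.symm_apply_eq, ins_succAbove, Equiv.apply_symm_apply]

theorem ins_bij (m : ℕ) : Function.Bijective (ins m) := by
  rw [Fintype.bijective_iff_injective_and_card]
  constructor
  · rintro ⟨p, τ⟩ ⟨q, ρ⟩ h
    have hp : p = q := by
      rw [← ins_symm_zero m p τ, h, ins_symm_zero]
    subst hp
    have : τ = ρ := by
      ext i : 1
      apply Fin.succ_injective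
      rw [← ins_succAbove m p τ, h, ins_succAbove]
    rw [this]
  · simp [Fintype.card_perm, Nat.factorial_succ]

theorem ins_mem (k : ℕ) (p : Fin (k+3)) (τ : Equiv.Perm (Fin (k+2))) :
    ins (k+2) (p, τ) ∈ SPerm (k+3) 2 1 ↔
      τ ∈ SPerm (k+2) 1 1 ∧ (τ.symm (Fin.last (k+1))).castSucc < p := by
  rw [mem11, mem21, ← Fin.succ_last, ins_symm_succ, ins_symm_succ, ins_symm_zero]
  have hlt : p.succAbove (τ.symm (Fin.last (k+1))) < p ↔
      (τ.symm (Fin.last (k+1))).castSucc < p := Fin.succAbove_lt_iff_castSucc_lt _ _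
  rw [hlt]
  constructor
  · rintro ⟨h, h2, h3⟩
    refine ⟨⟨?_, ?_⟩, h3⟩
    · rintro ⟨a, b, c, d, h⟩
      apply ‹Avoids1324 (ins (k+2) (p, τ))›
      refine ⟨p.succAbove a, p.succAbove b, p.succAbove c, p.succAbove d, ?_⟩
      simpa [ins_succAbove] using h
    · rw [Fin.succAbove_of_castSucc_lt _ _ h3] at h2
      by_cases h4 : (τ.symm 0).castSucc < p
      · rw [Fin.succAbove_of_castSucc_lt _ _ h4] at h2
        simpa using h2
      · rw [Fin.succAbove_of_le_castSucc _ _ (not_lt.mp h4)] at h2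
        simp [Fin.lt_def] at h2 h3 h4
        omega
  · rintro ⟨⟨h, h2⟩, h3⟩
    have h4 : (τ.symm 0).castSucc < p := by
      simp [Fin.lt_def] at h3 ⊢
      omega
    refine ⟨?_, ?_, h3⟩
    · rintro ⟨a, b, c, d, hab, hbc, hcd, h5, h6, h7⟩
      have key : ∀ x, x = p ∨ ∃ y, x = p.succAbove y := by
        intro x
        by_cases hx : x = p
        · exact Or.inl hx
        · obtain ⟨y, hy⟩ := Fin.exists_succAbove_eq hx
          exact Or.inr ⟨y, hy.symm⟩
      have np : ∀ x y, ins (k+2) (p, τ) x < ins (k+2) (p, τ) y → y ≠ p := by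
        rintro x y hxy rfl
        rw [ins_self] at hxy
        exact absurd hxy (Fin.not_lt_zero _)
      obtain ⟨b, rfl⟩ := (key b).resolve_left (np _ _ h6)
      obtain ⟨c, rfl⟩ := (key c).resolve_left (np _ _ h5)
      obtain ⟨d, rfl⟩ := (key d).resolve_left (np _ _ h7)
      rcases key a with rfl | ⟨a, rfl⟩
      · simp only [ins_succAbove, Fin.succ_lt_succ_iff, Fin.succAbove_lt_succAbove_iff] at *
        have hb : τ.symm 0 < b := by
          have := (Fin.lt_succAbove_iff_le_castSucc _ _).mp hab
          exact Fin.castSucc_lt_castSucc_iff.mp (lt_of_lt_of_le h4 this)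
        refine h ⟨τ.symm 0, b, c, d, hb, hbc, hcd, ?_, h6, h7⟩
        rw [Equiv.apply_symm_apply, Fin.pos_iff_ne_zero]
        intro hc
        rw [← hc, Equiv.symm_apply_apply] at hb
        exact lt_asymm hb hbc
      · simp only [ins_succAbove, Fin.succ_lt_succ_iff, Fin.succAbove_lt_succAbove_iff] at *
        exact h ⟨a, b, c, d, hab, hbc, hcd, h5, h6, h7⟩
    · rw [Fin.succAbove_of_castSucc_lt _ _ h3, Fin.succAbove_of_castSucc_lt _ _ h4]
      simpa using h2

/-- Reverse-complement. -/
def rc (m : ℕ) (τ : Equiv.Perm (Fin m)) : Equiv.Perm (Fin m) :=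
  (Fin.revPerm.trans τ).trans Fin.revPerm

theorem rc_rc (m : ℕ) (τ : Equiv.Perm (Fin m)) : rc m (rc m τ) = τ := by
  ext i : 1
  simp [rc]

theorem rc_symm (m : ℕ) (τ : Equiv.Perm (Fin m)) (i : Fin m) :
    (rc m τ).symm i = (τ.symm i.rev).rev := by
  simp [rc]

theorem rc_mem (k : ℕ) (τ : Equiv.Perm (Fin (k+2))) (h : τ ∈ SPerm (k+2) 1 1) :
    rc (k+2) τ ∈ SPerm (k+2) 1 1 := by
  rw [mem11] at *
  obtain ⟨h, h2⟩ := h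
  constructor
  · rintro ⟨a, b, c, d, hab, hbc, hcd, h5, h6, h7⟩
    simp only [rc, Equiv.trans_apply, Fin.revPerm_apply, Fin.rev_lt_rev] at h5 h6 h7
    exact h ⟨d.rev, c.rev, b.rev, a.rev, by simpa, by simpa, by simpa, h7, h6, h5⟩
  · rw [rc_symm, rc_symm, Fin.rev_last, Fin.rev_zero, Fin.val_rev, Fin.val_rev]
    omega

theorem stmt_9 (n : ℕ) (hn : 3 ≤ n) :
    2 * (SPerm n 2 1).ncard = (n - 1) * (SPerm (n - 1) 1 1).ncard := by
  classical
  obtain ⟨k, rfl⟩ : ∃ k, n = k + 3 := ⟨n - 3, by omega⟩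
  change 2 * (SPerm (k+3) 2 1).ncard = (k+2) * (SPerm (k+2) 1 1).ncard
  let S : Finset (Equiv.Perm (Fin (k+2))) := Finset.univ.filter (· ∈ SPerm (k+2) 1 1)
  have hS : ∀ τ, τ ∈ S ↔ τ ∈ SPerm (k+2) 1 1 := fun τ => by simp [S]
  let q : Equiv.Perm (Fin (k+2)) → Fin (k+2) := fun τ => τ.symm (Fin.last (k+1))
  let B := S.sigma (fun τ => Finset.Ioi (q τ).castSucc)
  have h1 : (SPerm (k+2) 1 1).ncard = S.card := by
    rw [← Set.ncard_coe_finset]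
    congr 1
    ext τ
    simp [S]
  have h2 : (SPerm (k+3) 2 1).ncard = B.card := by
    rw [← Set.ncard_coe_finset]
    symm
    refine Set.ncard_congr (fun x _ => ins (k+2) (x.2, x.1)) ?_ ?_ ?_
    · rintro ⟨τ, p⟩ hx
      rw [ins_mem]
      simpa [B, hS, q] using hx
    · rintro ⟨τ, p⟩ ⟨τ', p'⟩ _ _ h
      have := (ins_bij _).1 h
      simp only [Prod.mk.injEq] at this
      obtain ⟨rfl, rfl⟩ := this
      rfl
    · intro σ hσ
      obtain ⟨⟨p, τ⟩, rfl⟩ := (ins_bij _).2 σ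
      rw [ins_mem] at hσ
      exact ⟨⟨τ, p⟩, by simpa [B, hS, q] using hσ, rfl⟩
  have h3 : B.card = ∑ τ ∈ S, (k + 2 - (q τ).val) := by
    simp only [B, Finset.card_sigma]
    refine Finset.sum_congr rfl fun τ _ => ?_
    rw [Fin.card_Ioi]
    simp
  have h4 : ∑ τ ∈ S, (k + 2 - (q τ).val) = ∑ τ ∈ S, (q τ).val := by
    refine Finset.sum_bij' (fun τ _ => rc _ τ) (fun τ _ => rc _ τ) ?_ ?_ ?_ ?_ ?_
    · intro τ h
      exact (hS _).2 (rc_mem _ _ ((hS _).1 h))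
    · intro τ h
      exact (hS _).2 (rc_mem _ _ ((hS _).1 h))
    · intro τ _
      exact rc_rc _ _
    · intro τ _
      exact rc_rc _ _
    · intro τ h
      have := ((mem11 _ _).1 ((hS _).1 h)).2
      simp only [q]
      rw [rc_symm, Fin.rev_last, Fin.val_rev]
      omega
  rw [h1, h2, two_mul]
  nth_rewrite 2 [h3]
  rw [h3.trans h4, ← Finset.sum_add_distrib, mul_comm, ← smul_eq_mul, ← Finset.sum_const]
  refine Finset.sum_congr rfl fun τ _ => ?_
  have := (q τ).isLt
  omega
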